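/- For every v ∈ {23, 29, 41, 47, 53, 59, 71, 83}, there exists an RDSQS(2v), i.e., a Steiner quadruple system SQS(2v) whose derived design at every point is resolvable. -/

import Mathlib

open Finset

/-- A parallel class on point set `Y`: a collection of blocks that partitions `Y`. -/
def IsParallelClass (Y : Finset ℕ) (P : Finset (Finset ℕ)) : Prop :=
  (∀ b ∈ P, b ⊆ Y) ∧ ∀ y ∈ Y, ∃! b, b ∈ P ∧ y ∈ b

/-- A block collection `B` on point set `Y` is resolvable if it can be partitioned
into parallel classes of `Y`. -/
def Resolvable (Y : Finset ℕ) (B : Finset (Finset ℕ)) : Prop :=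
  ∃ (r : ℕ) (P : Fin r → Finset (Finset ℕ)),
    (∀ i, IsParallelClass Y (P i)) ∧ (∀ i, P i ⊆ B) ∧ ∀ b ∈ B, ∃! i, b ∈ P i

/-- The blocks of the derived design at a point `x`:
`{B \ {x} : x ∈ B, B ∈ B}`. -/
def derivedBlocks (B : Finset (Finset ℕ)) (x : ℕ) : Finset (Finset ℕ) :=
  (B.filter fun b => x ∈ b).image fun b => b.erase x

/-- A Steiner system S(t, k, v) on point set `X` with block collection `B`. -/
def IsSteiner (t k v : ℕ) (X : Finset ℕ) (B : Finset (Finset ℕ)) : Prop :=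
  X.card = v ∧ (∀ b ∈ B, b ⊆ X ∧ b.card = k) ∧
  ∀ T ⊆ X, T.card = t → ∃! b, b ∈ B ∧ T ⊆ b

/-- An RDS(t, k, v): a Steiner system S(t, k, v) whose derived design at every
point is resolvable. -/
def IsRDS (t k v : ℕ) (X : Finset ℕ) (B : Finset (Finset ℕ)) : Prop :=
  IsSteiner t k v X B ∧ ∀ x ∈ X, Resolvable (X.erase x) (derivedBlocks B x)

/-- Existence of an RDS(t, k, v). -/
def ExistsRDS (t k v : ℕ) : Prop := ∃ X B, IsRDS t k v X B

/-- Existence of an RDSQS(v), i.e. an RDS(3, 4, v). -/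
def ExistsRDSQS (v : ℕ) : Prop := ExistsRDS 3 4 v

/-- A Kirkman triple system KTS(v): a resolvable Steiner triple system. -/
def IsKTS (v : ℕ) (X : Finset ℕ) (B : Finset (Finset ℕ)) : Prop :=
  IsSteiner 2 3 v X B ∧ Resolvable X B

/-- Existence of a large set of Kirkman triple systems LKTS(v): a partition of
all 3-element subsets of a v-element set into v - 2 classes, each a KTS(v). -/
def ExistsLKTS (v : ℕ) : Prop :=
  ∃ (X : Finset ℕ) (C : Fin (v - 2) → Finset (Finset ℕ)),
    X.card = v ∧ (∀ i, IsKTS v X (C i)) ∧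
    (∀ T : Finset ℕ, (T ⊆ X ∧ T.card = 3) ↔ ∃ i, T ∈ C i) ∧
    ∀ (T : Finset ℕ) (i j : Fin (v - 2)), T ∈ C i → T ∈ C j → i = j

/-- A t-wise balanced design S(t, K, v) with block sizes from the set `K`. -/
def IsTBD (t : ℕ) (K : Set ℕ) (v : ℕ) (X : Finset ℕ) (B : Finset (Finset ℕ)) : Prop :=
  X.card = v ∧ (∀ b ∈ B, b ⊆ X ∧ b.card ∈ K) ∧
  ∀ T ⊆ X, T.card = t → ∃! b, b ∈ B ∧ T ⊆ b

/-- A group divisible design GDD(t, K, g*n) of type g^n: `Gs` is a partition of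
`X` into `n` groups of size `g`; blocks have sizes in `K`, meet every group in
at most one point, and every t-subset of `X` meeting every group in at most one
point lies in exactly one block. -/
def IsGDD (t : ℕ) (K : Set ℕ) (g n : ℕ) (X : Finset ℕ)
    (Gs Bs : Finset (Finset ℕ)) : Prop :=
  X.card = g * n ∧ Gs.card = n ∧
  (∀ G ∈ Gs, G ⊆ X ∧ G.card = g) ∧
  (∀ x ∈ X, ∃! G, G ∈ Gs ∧ x ∈ G) ∧
  (∀ b ∈ Bs, b ⊆ X ∧ b.card ∈ K) ∧
  (∀ b ∈ Bs, ∀ G ∈ Gs, (b ∩ G).card ≤ 1) ∧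
  ∀ T ⊆ X, T.card = t → (∀ G ∈ Gs, (T ∩ G).card ≤ 1) → ∃! b, b ∈ Bs ∧ T ⊆ b

/-- An RDGDD(t, K, g*n) of type g^n: a GDD whose derived design at every point
(on point set `X \ G`, where `G` is the group of the point) is resolvable. -/
def IsRDGDD (t : ℕ) (K : Set ℕ) (g n : ℕ) (X : Finset ℕ)
    (Gs Bs : Finset (Finset ℕ)) : Prop :=
  IsGDD t K g n X Gs Bs ∧
  ∀ x ∈ X, ∀ G ∈ Gs, x ∈ G → Resolvable (X \ G) (derivedBlocks Bs x)

/-- An RDSQS*(v): an SQS(v) with v ≡ 1 (mod 3) such that, for every point `x`,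
the derived blocks at `x` contain a parallel class `P'` (enumerated by `Bk`);
the multiset consisting of each triple of `P'` three times and each remaining
derived triple twice can be partitioned into (v-1) parallel classes
`P k l` (k ranging over Fin ((v-1)/3), l over Fin 3); and for each `k` the three
parallel classes `P k l` share the common triple `Bk k`. -/
def IsRDSQSstar (v : ℕ) (X : Finset ℕ) (B : Finset (Finset ℕ)) : Prop :=
  IsSteiner 3 4 v X B ∧ v % 3 = 1 ∧
  ∀ x ∈ X, ∃ (P' : Finset (Finset ℕ)) (Bk : Fin ((v - 1) / 3) → Finset ℕ)
    (P : Fin ((v - 1) / 3) → Fin 3 → Finset (Finset ℕ)),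
    P' ⊆ derivedBlocks B x ∧
    IsParallelClass (X.erase x) P' ∧
    (∀ k, Bk k ∈ P') ∧
    (∀ b ∈ P', ∃ k, Bk k = b) ∧
    Function.Injective Bk ∧
    (∀ k l, IsParallelClass (X.erase x) (P k l)) ∧
    ((∑ k, ∑ l, (P k l).val) =
        3 • P'.val + 2 • ((derivedBlocks B x) \ P').val) ∧
    ∀ k l, Bk k ∈ P k l

theorem core (n : ℕ) (hn : 0 < n) (φ : ℕ → ℕ → ℕ)
    (hX : ∀ x < n, ∀ y < n, φ x y < n)
    (h0 : ∀ x < n, φ x x = 0)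
    (hinj : ∀ x < n, ∀ y < n, ∀ z < n, φ x y = φ x z → y = z)
    (hlaw : ∀ x < n, ∀ y < n, ∀ z < n, φ (φ y x) (φ y z) = φ x z)
    (r : ℕ) (P : Fin r → Finset (Finset ℕ))
    (hsub : ∀ i, ∀ T ∈ P i, T.card = 3 ∧ ∀ y ∈ T, 0 < y ∧ y < n)
    (hpar : ∀ i, ∀ y, 0 < y → y < n → ∃! T, T ∈ P i ∧ y ∈ T)
    (hpairE : ∀ a b, 0 < a → a < b → b < n → ∃ i, ∃ T ∈ P i, a ∈ T ∧ b ∈ T)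
    (hpairU : ∀ i j, ∀ T ∈ P i, ∀ T' ∈ P j, ∀ a ∈ T, ∀ b ∈ T, a ≠ b → a ∈ T' → b ∈ T' →
      i = j ∧ T = T')
    (hclos : ∀ i, ∀ T ∈ P i, ∀ p ∈ T, ∃ j, ((insert 0 T).image (φ p)).erase 0 ∈ P j) :
    ExistsRDS 3 4 n := by
  classical
  have hpairE' : ∀ a b, 0 < a → 0 < b → a ≠ b → a < n → b < n →
      ∃ i, ∃ T ∈ P i, a ∈ T ∧ b ∈ T := by
    intro a b ha hb hab han hbn
    rcases lt_or_gt_of_ne hab with h | h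
    · exact hpairE a b ha h hbn
    · obtain ⟨i, T, hT, h1, h2⟩ := hpairE b a hb h han
      exact ⟨i, T, hT, h2, h1⟩
  have hsurj : ∀ x < n, ∀ w < n, ∃ y < n, φ x y = w := by
    intro x hx w hw
    have := Finset.surj_on_of_inj_on_of_card_le (s := range n) (t := range n)
      (fun y _ => φ x y) (fun y hy => by simpa using hX x hx y (by simpa using hy))
      (fun y z hy hz h => hinj x hx y (by simpa using hy) z (by simpa using hz) h) le_rfl
      w (by simpa using hw)
    obtain ⟨y, hy, h⟩ := this
    exact ⟨y, by simpa using hy, h.symm⟩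
  have himg : ∀ x < n, ∀ s t : Finset ℕ, (∀ y ∈ s, y < n) → (∀ y ∈ t, y < n) →
      s.image (φ x) = t.image (φ x) → s = t := by
    intro x hx
    have key : ∀ s t : Finset ℕ, (∀ y ∈ s, y < n) → (∀ y ∈ t, y < n) →
        s.image (φ x) = t.image (φ x) → s ⊆ t := by
      intro s t hs ht h y hy
      have : φ x y ∈ t.image (φ x) := h ▸ mem_image_of_mem _ hy
      obtain ⟨z, hz, hzy⟩ := mem_image.1 this
      rwa [← hinj x hx z (ht z hz) y (hs y hy) hzy]
    intro s t hs ht h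
    exact Subset.antisymm (key s t hs ht h) (key t s ht hs h.symm)
  have hcardimg : ∀ x < n, ∀ s : Finset ℕ, (∀ y ∈ s, y < n) → (s.image (φ x)).card = s.card := by
    intro x hx s hs
    exact card_image_of_injOn fun y hy z hz h => hinj x hx y (hs y hy) z (hs z hz) h
  -- block collection
  set B : Finset (Finset ℕ) := ((range n).powersetCard 4).filter fun b =>
    ∃ x ∈ b, ∃ i, (b.image (φ x)).erase 0 ∈ P i with hB
  have memB : ∀ b, b ∈ B ↔ ((∀ y ∈ b, y < n) ∧ b.card = 4) ∧
      ∃ x ∈ b, ∃ i, (b.image (φ x)).erase 0 ∈ P i := by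
    intro b
    simp only [hB, mem_filter, mem_powersetCard, subset_iff, mem_range]
  have allB : ∀ b ∈ B, ∀ x ∈ b, ∃ i, (b.image (φ x)).erase 0 ∈ P i := by
    intro b hb x hx
    obtain ⟨⟨hbn, hb4⟩, y, hy, i, hi⟩ := (memB b).1 hb
    by_cases hxy : x = y
    · subst hxy; exact ⟨i, hi⟩
    · have hp : φ y x ∈ (b.image (φ y)).erase 0 := by
        refine mem_erase.2 ⟨?_, mem_image_of_mem _ hx⟩
        intro h
        exact hxy (hinj y (hbn y hy) x (hbn x hx) y (hbn y hy) (h.trans (h0 y (hbn y hy)).symm))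
      obtain ⟨j, hj⟩ := hclos i _ hi _ hp
      refine ⟨j, ?_⟩
      rw [insert_erase (mem_image.2 ⟨y, hy, h0 y (hbn y hy)⟩), image_image] at hj
      convert hj using 2
      apply image_congr
      intro z hz
      exact (hlaw x (hbn x hx) y (hbn y hy) z (hbn z hz)).symm
  have hz : ∀ x < n, ∀ y < n, φ x y = 0 → y = x := fun x hx y hy h =>
    hinj x hx y hy x hx (h.trans (h0 x hx).symm)
  have eraseimg : ∀ b : Finset ℕ, (∀ y ∈ b, y < n) → ∀ x ∈ b,
      (b.erase x).image (φ x) = (b.image (φ x)).erase 0 := by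
    intro b hb x hx
    ext w
    simp only [mem_image, mem_erase]
    constructor
    · rintro ⟨y, ⟨hyx, hy⟩, rfl⟩
      exact ⟨fun h => hyx (hz x (hb x hx) y (hb y hy) h), y, hy, rfl⟩
    · rintro ⟨hw, y, hy, rfl⟩
      refine ⟨y, ⟨?_, hy⟩, rfl⟩
      rintro rfl
      exact hw (h0 y (hb y hy))
  -- pulling back a triple
  have pull : ∀ x < n, ∀ i, ∀ T ∈ P i, ∃ t : Finset ℕ, (∀ y ∈ t, y < n) ∧ x ∉ t ∧
      t.image (φ x) = T ∧ insert x t ∈ B := by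
    intro x hx i T hT
    obtain ⟨hc, hTn⟩ := hsub i T hT
    set t := (range n).filter fun y => φ x y ∈ T with ht
    have htn : ∀ y ∈ t, y < n := fun y hy => by
      rw [ht, mem_filter, mem_range] at hy; exact hy.1
    have hxt : x ∉ t := by
      intro h
      rw [ht, mem_filter, h0 x hx] at h
      exact absurd (hTn 0 h.2).1 (lt_irrefl 0)
    have himt : t.image (φ x) = T := by
      ext w
      simp only [mem_image, ht, mem_filter, mem_range]
      constructor
      · rintro ⟨y, ⟨_, h⟩, rfl⟩; exact h
      · intro hw
        obtain ⟨y, hy, rfl⟩ := hsurj x hx w (hTn w hw).2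
        exact ⟨y, ⟨hy, hw⟩, rfl⟩
    have hins : ∀ y ∈ insert x t, y < n := by
      intro y hy
      rcases mem_insert.1 hy with rfl | h
      · exact hx
      · exact htn y h
    refine ⟨t, htn, hxt, himt, (memB _).2 ⟨⟨hins, ?_⟩, x, mem_insert_self _ _, i, ?_⟩⟩
    · rw [card_insert_of_notMem hxt, ← hcardimg x hx t htn, himt, hc]
    · rw [← eraseimg _ hins x (mem_insert_self _ _), erase_insert hxt, himt]; exact hT
  refine ⟨range n, B, ⟨card_range n, ?_, ?_⟩, ?_⟩
  · intro b hb
    obtain ⟨⟨h1, h2⟩, _⟩ := (memB b).1 hb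
    exact ⟨fun y hy => mem_range.2 (h1 y hy), h2⟩
  · intro S hS hS3
    have hSn : ∀ y ∈ S, y < n := fun y hy => mem_range.1 (hS hy)
    obtain ⟨x, y, z, hxy, hxz, hyz, rfl⟩ := card_eq_three.1 hS3
    have hx : x < n := hSn x (by simp)
    have hy : y < n := hSn y (by simp)
    have hz' : z < n := hSn z (by simp)
    have hay : φ x y ≠ 0 := fun h => hxy (hz x hx y hy h).symm
    have haz : φ x z ≠ 0 := fun h => hxz (hz x hx z hz' h).symm
    have hne : φ x y ≠ φ x z := fun h => hyz (hinj x hx y hy z hz' h)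
    obtain ⟨i, T, hT, haT, hbT⟩ := hpairE' (φ x y) (φ x z) (Nat.pos_of_ne_zero hay)
      (Nat.pos_of_ne_zero haz) hne (hX x hx y hy) (hX x hx z hz')
    obtain ⟨t, htn, hxt, himt, hbB⟩ := pull x hx i T hT
    have memt : ∀ w < n, φ x w ∈ T → w ∈ t := by
      intro w hw hwT
      rw [← himt] at hwT
      obtain ⟨u, hu, huw⟩ := mem_image.1 hwT
      rwa [← hinj x hx u (htn u hu) w hw huw]
    refine ⟨insert x t, ⟨hbB, ?_⟩, ?_⟩
    · intro w hw
      simp only [mem_insert, mem_singleton] at hw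
      rcases hw with rfl | rfl | rfl
      · exact mem_insert_self _ _
      · exact mem_insert_of_mem (memt _ hy haT)
      · exact mem_insert_of_mem (memt _ hz' hbT)
    · rintro b' ⟨hb', hsb⟩
      have hb'n := ((memB b').1 hb').1.1
      have hxb : x ∈ b' := hsb (by simp)
      obtain ⟨j, hj⟩ := allB b' hb' x hxb
      have e := (hpairU i j T hT _ hj _ haT _ hbT hne
        (mem_erase.2 ⟨hay, mem_image_of_mem _ (hsb (by simp))⟩)
        (mem_erase.2 ⟨haz, mem_image_of_mem _ (hsb (by simp))⟩)).2
      rw [← eraseimg b' hb'n x hxb, ← himt] at e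
      have := himg x hx _ _ htn (fun y hy => hb'n y (mem_of_mem_erase hy)) e
      rw [this, insert_erase hxb]
  · intro x hx
    rw [mem_range] at hx
    have memd : ∀ t, t ∈ derivedBlocks B x ↔ ∃ b ∈ B, x ∈ b ∧ b.erase x = t := by
      intro t
      simp only [derivedBlocks, mem_image, mem_filter, and_assoc]
    refine ⟨r, fun i => (derivedBlocks B x).filter fun t => t.image (φ x) ∈ P i, ?_, ?_, ?_⟩
    · intro i
      have hdn : ∀ t ∈ derivedBlocks B x, ∀ y ∈ t, y < n ∧ y ≠ x := by
        intro t ht y hy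
        obtain ⟨b, hb, hxb, rfl⟩ := (memd t).1 ht
        exact ⟨((memB b).1 hb).1.1 y (mem_of_mem_erase hy), ne_of_mem_erase hy⟩
      refine ⟨?_, ?_⟩
      · intro t ht y hy
        have := hdn t (mem_filter.1 ht).1 y hy
        exact mem_erase.2 ⟨this.2, mem_range.2 this.1⟩
      · intro y hy
        obtain ⟨hyx, hyn⟩ := mem_erase.1 hy
        rw [mem_range] at hyn
        have hpos : 0 < φ x y := Nat.pos_of_ne_zero fun h => hyx (hz x hx y hyn h)
        obtain ⟨T, ⟨hT, hyT⟩, hu⟩ := hpar i (φ x y) hpos (hX x hx y hyn)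
        obtain ⟨t, htn, hxt, himt, hbB⟩ := pull x hx i T hT
        refine ⟨t, ⟨mem_filter.2 ⟨(memd t).2 ⟨_, hbB, mem_insert_self _ _, erase_insert hxt⟩, ?_⟩, ?_⟩, ?_⟩
        · rw [himt]; exact hT
        · rw [← himt] at hyT
          obtain ⟨u, hu', huw⟩ := mem_image.1 hyT
          rwa [← hinj x hx u (htn u hu') y hyn huw]
        · rintro t' ⟨ht', hyt'⟩
          obtain ⟨h1, h2⟩ := mem_filter.1 ht'
          have := hu _ ⟨h2, mem_image_of_mem _ hyt'⟩
          exact himg x hx _ _ (fun y hy => (hdn t' h1 y hy).1) htn (this.trans himt.symm)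
    · intro i; exact filter_subset _ _
    · intro t ht
      obtain ⟨b, hb, hxb, rfl⟩ := (memd t).1 ht
      obtain ⟨i, hi⟩ := allB b hb x hxb
      rw [← eraseimg b ((memB b).1 hb).1.1 x hxb] at hi
      refine ⟨i, mem_filter.2 ⟨ht, hi⟩, ?_⟩
      intro j hj
      have hj := (mem_filter.1 hj).2
      obtain ⟨a, b', c, hab, _, _, he⟩ := card_eq_three.1 (hsub i _ hi).1
      have ha : a ∈ (b.erase x).image (φ x) := by rw [he]; simp
      have hb' : b' ∈ (b.erase x).image (φ x) := by rw [he]; simp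
      exact (hpairU j i _ hj _ hi a ha b' hb' hab ha hb').1

namespace RDSQSAux

def mu (v m p : ℕ) : ℕ := (m * (p % v)) % v + v * (p / v)

def ph (v p z : ℕ) : ℕ :=
  bif Nat.ble v p then (p - z % v) % v + (v - v * (z / v))
  else (z % v + (v - p)) % v + v * (z / v)

theorem lay {v p : ℕ} (hp : p < 2 * v) : p / v = 0 ∨ p / v = 1 := by
  have h : p / v < 2 := Nat.div_lt_of_lt_mul (by omega)
  generalize p / v = a at h ⊢
  omega

theorem ptExt {v x y : ℕ} (h1 : (x : ZMod v) = (y : ZMod v)) (h2 : x / v = y / v) : x = y := by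
  have h3 := (ZMod.natCast_eq_natCast_iff' x y v).1 h1
  rw [← Nat.div_add_mod x v, ← Nat.div_add_mod y v, h2, h3]

theorem mu_cast (v m p : ℕ) : ((mu v m p : ℕ) : ZMod v) = m * p := by
  simp [mu]

theorem mu_lay {v : ℕ} (hv : 0 < v) (m p : ℕ) : mu v m p / v = p / v := by
  unfold mu
  rw [Nat.add_mul_div_left _ _ hv, Nat.div_eq_of_lt (Nat.mod_lt _ hv), zero_add]

theorem mu_lt {v : ℕ} (hv : 0 < v) (m p : ℕ) (hp : p < 2 * v) : mu v m p < 2 * v := by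
  have h := mu_lay hv m p
  have : mu v m p / v < 2 := by
    rw [h]; exact Nat.div_lt_of_lt_mul (by omega)
  have := (Nat.div_lt_iff_lt_mul hv).1 this
  exact this

theorem lay0 {v p : ℕ} (hv : 0 < v) : p / v = 0 ↔ p < v := by
  rw [Nat.div_eq_zero_iff]; omega

theorem ph_cast0 {v p : ℕ} (hv : 0 < v) (h : p / v = 0) (z : ℕ) :
    ((ph v p z : ℕ) : ZMod v) = z - p := by
  have hp := (lay0 hv).1 h
  have : Nat.ble v p = false := by
    rw [← Bool.not_eq_true, Nat.ble_eq]; omega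
  simp only [ph, this, cond_false]
  push_cast [hp.le]
  simp [Nat.cast_sub hp.le]
  ring

theorem ph_cast1 {v p : ℕ} (hv : 0 < v) (h : p / v = 1) {z : ℕ} (hz : z < 2 * v) :
    ((ph v p z : ℕ) : ZMod v) = p - z := by
  have hp : ¬ p < v := fun hh => by have := (lay0 hv).2 hh; omega
  have : Nat.ble v p = true := by
    rw [Nat.ble_eq]; omega
  have h1 : z % v ≤ p := by have := Nat.mod_lt z hv; omega
  have h2 : v * (z / v) ≤ v := by rcases lay hz with h | h <;> simp [h]
  simp only [ph, this, cond_true]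
  simp [Nat.cast_sub h1, Nat.cast_sub h2]

theorem ph_lay0 {v p : ℕ} (hv : 0 < v) (h : p / v = 0) (z : ℕ) :
    ph v p z / v = z / v := by
  have hp := (lay0 hv).1 h
  have : Nat.ble v p = false := by
    rw [← Bool.not_eq_true, Nat.ble_eq]; omega
  simp only [ph, this, cond_false]
  rw [Nat.add_mul_div_left _ _ hv, Nat.div_eq_of_lt (Nat.mod_lt _ hv), zero_add]

theorem ph_lay1 {v p : ℕ} (hv : 0 < v) (h : p / v = 1) {z : ℕ} (hz : z < 2 * v) :
    ph v p z / v = 1 - z / v := by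
  have hp : ¬ p < v := fun hh => by have := (lay0 hv).2 hh; omega
  have : Nat.ble v p = true := by
    rw [Nat.ble_eq]; omega
  simp only [ph, this, cond_true]
  have e : v - v * (z / v) = v * (1 - z / v) := by rw [Nat.mul_sub, mul_one]
  rw [e, Nat.add_mul_div_left _ _ hv, Nat.div_eq_of_lt (Nat.mod_lt _ hv), zero_add]

theorem ph_lt {v : ℕ} (hv : 0 < v) : ∀ x < 2 * v, ∀ y < 2 * v, ph v x y < 2 * v := by
  intro x hx y hy
  apply (Nat.div_lt_iff_lt_mul hv).1
  rcases lay hx with h | h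
  · rw [ph_lay0 hv h]; rcases lay hy with h | h <;> omega
  · rw [ph_lay1 hv h hy]; exact lt_of_le_of_lt (Nat.sub_le _ _) (by norm_num)

theorem ph_self {v : ℕ} (hv : 0 < v) : ∀ x < 2 * v, ph v x x = 0 := by
  intro x hx
  apply ptExt (v := v)
  · rcases lay hx with h | h
    · rw [ph_cast0 hv h]; simp
    · rw [ph_cast1 hv h hx]; simp
  · rcases lay hx with h | h
    · rw [ph_lay0 hv h]; simp [h]
    · rw [ph_lay1 hv h hx]; simp [h]

theorem ph_inj {v : ℕ} (hv : 0 < v) :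
    ∀ x < 2 * v, ∀ y < 2 * v, ∀ z < 2 * v, ph v x y = ph v x z → y = z := by
  intro x hx y hy z hz e
  have e1 := congrArg (fun n : ℕ => (n : ZMod v)) e
  have e2 := congrArg (fun n : ℕ => n / v) e
  rcases lay hx with h | h
  · rw [ph_cast0 hv h, ph_cast0 hv h] at e1
    rw [ph_lay0 hv h, ph_lay0 hv h] at e2
    exact ptExt (by simpa using e1) e2
  · rw [ph_cast1 hv h hy, ph_cast1 hv h hz] at e1
    rw [ph_lay1 hv h hy, ph_lay1 hv h hz] at e2
    refine ptExt (by simpa using e1) ?_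
    rcases lay hy with h | h <;> rcases lay hz with h' | h' <;> omega

theorem ph_law {v : ℕ} (hv : 0 < v) :
    ∀ x < 2 * v, ∀ y < 2 * v, ∀ z < 2 * v, ph v (ph v y x) (ph v y z) = ph v x z := by
  intro x hx y hy z hz
  have l1 := ph_lt hv y hy x hx
  have l2 := ph_lt hv y hy z hz
  apply ptExt (v := v)
  · rcases lay hy with h | h
    · have k := ph_lay0 hv h x
      rcases lay hx with hh | hh
      · rw [hh] at k
        rw [ph_cast0 hv k, ph_cast0 hv h, ph_cast0 hv h, ph_cast0 hv hh]; ring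
      · rw [hh] at k
        rw [ph_cast1 hv k l2, ph_cast0 hv h, ph_cast0 hv h, ph_cast1 hv hh hz]; ring
    · have k := ph_lay1 hv h hx
      rcases lay hx with hh | hh
      · rw [hh] at k
        rw [ph_cast1 hv k l2, ph_cast1 hv h hx, ph_cast1 hv h hz, ph_cast0 hv hh]; ring
      · rw [hh] at k
        rw [ph_cast0 hv k, ph_cast1 hv h hx, ph_cast1 hv h hz, ph_cast1 hv hh hz]; ring
  · rcases lay hy with h | h
    · have k := ph_lay0 hv h x
      rcases lay hx with hh | hh
      · rw [hh] at k
        rw [ph_lay0 hv k, ph_lay0 hv h, ph_lay0 hv hh]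
      · rw [hh] at k
        rw [ph_lay1 hv k l2, ph_lay0 hv h, ph_lay1 hv hh hz]
    · have k := ph_lay1 hv h hx
      rcases lay hx with hh | hh
      · rw [hh] at k
        rw [ph_lay1 hv k l2, ph_lay1 hv h hz, ph_lay0 hv hh]
        rcases lay hz with h' | h' <;> omega
      · rw [hh] at k
        rw [ph_lay0 hv k, ph_lay1 hv h hz, ph_lay1 hv hh hz]

theorem mu_ph {v : ℕ} (hv : 0 < v) (m : ℕ) {p z : ℕ} (hp : p < 2 * v) (hz : z < 2 * v) :
    ph v (mu v m p) (mu v m z) = mu v m (ph v p z) := by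
  have hk := mu_lay hv m p
  have l := mu_lt hv m z hz
  apply ptExt (v := v)
  · rcases lay hp with h | h
    · rw [h] at hk
      rw [ph_cast0 hv hk, mu_cast, mu_cast, mu_cast, ph_cast0 hv h]; ring
    · rw [h] at hk
      rw [ph_cast1 hv hk l, mu_cast, mu_cast, mu_cast, ph_cast1 hv h hz]; ring
  · rcases lay hp with h | h
    · rw [h] at hk
      rw [ph_lay0 hv hk, mu_lay hv, mu_lay hv, ph_lay0 hv h]
    · rw [h] at hk
      rw [ph_lay1 hv hk l, mu_lay hv, mu_lay hv, ph_lay1 hv h hz]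

theorem mu_zero (v m : ℕ) : mu v m 0 = 0 := by simp [mu]

theorem mu_mu {v : ℕ} (hv : 0 < v) (m m' p : ℕ) : mu v m (mu v m' p) = mu v (m * m') p := by
  apply ptExt (v := v)
  · simp only [mu_cast]; push_cast; ring
  · simp only [mu_lay hv]

abbrev Tr := ℕ × ℕ × ℕ

def toS (t : Tr) : Finset ℕ := {t.1, t.2.1, t.2.2}
def pts (t : Tr) : List ℕ := [t.1, t.2.1, t.2.2]
def mt (v m : ℕ) (t : Tr) : Tr := (mu v m t.1, mu v m t.2.1, mu v m t.2.2)

theorem toS_mt (v m : ℕ) (t : Tr) : toS (mt v m t) = (toS t).image (mu v m) := by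
  simp [toS, mt, Finset.image_insert]

theorem mem_toS (t : Tr) (y : ℕ) : y ∈ toS t ↔ y ∈ pts t := by
  simp [toS, pts]

def ins : List ℕ → ℕ → ℕ
  | [], m => m
  | x :: xs, m =>
    bif Nat.beq (Nat.land (Nat.shiftRight m x) 1) 0 then ins xs (Nat.lor m (Nat.shiftLeft 1 x))
    else 0

theorem bit_eq (m x : ℕ) : Nat.beq (Nat.land (Nat.shiftRight m x) 1) 0 = !(m.testBit x) := by
  have h : Nat.land (Nat.shiftRight m x) 1 = (m >>> x) % 2 := Nat.and_one_is_mod _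
  rw [h, Nat.testBit_eq_decide_div_mod_eq, Nat.shiftRight_eq_div_pow]
  rcases Nat.mod_two_eq_zero_or_one (m / 2 ^ x) with h | h <;> rw [h] <;> rfl

theorem ins_spec : ∀ (l : List ℕ) (m : ℕ), ins l m ≠ 0 →
    l.Nodup ∧ (∀ x ∈ l, m.testBit x = false) ∧
    ∀ y, (ins l m).testBit y = true ↔ (m.testBit y = true ∨ y ∈ l)
  | [], m, _ => by simp [ins]
  | x :: xs, m, h => by
    rw [ins, bit_eq] at h ⊢
    cases hb : m.testBit x
    · rw [hb] at h
      simp only [Bool.not_false, cond_true] at h ⊢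
      obtain ⟨h1, h2, h3⟩ := ins_spec xs _ h
      have key : ∀ y, (Nat.lor m (Nat.shiftLeft 1 x)).testBit y =
          (m.testBit y || decide (x = y)) := by
        intro y
        have : Nat.lor m (Nat.shiftLeft 1 x) = m ||| 1 <<< x := rfl
        rw [this, Nat.testBit_or, Nat.one_shiftLeft, Nat.testBit_two_pow]
      refine ⟨?_, ?_, ?_⟩
      · rw [List.nodup_cons]
        refine ⟨fun hx => ?_, h1⟩
        have := h2 x hx
        rw [key] at this; simp at this
      · intro y hy
        rcases List.mem_cons.1 hy with rfl | hy
        · exact hb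
        · have := h2 y hy
          rw [key] at this
          simp at this; exact this.1
      · intro y
        rw [h3, key]
        simp only [Bool.or_eq_true, decide_eq_true_eq, List.mem_cons]
        tauto
    · rw [hb] at h; simp at h

theorem fm_uniq {α β : Type*} {l : List α} {f : α → List β} (h : (l.flatMap f).Nodup) {x y : α}
    (hx : x ∈ l) (hy : y ∈ l) {b : β} (h1 : b ∈ f x) (h2 : b ∈ f y) : x = y := by
  by_contra hne
  have hp := (List.nodup_flatMap.1 h).2
  have : Std.Symm (Function.onFun List.Disjoint f) := ⟨fun _ _ h => List.Disjoint.symm h⟩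
  exact hp.forall hx hy hne h1 h2


def kl (v g h : ℕ) (c0 c1 : List Tr) (i : ℕ) : List Tr :=
  bif Nat.ble (i + 1) h then c0.map (mt v (g ^ i)) else c1.map (mt v (g ^ (i - h)))

def chkA (v g h : ℕ) (c0 c1 : List Tr) : Bool :=
  (List.range (2 * h)).all fun i =>
    Nat.beq (ins ((kl v g h c0 c1 i).flatMap pts) 1) (2 ^ (2 * v) - 1)

def cd (n x y : ℕ) : ℕ := bif Nat.ble x y then x * n + y else y * n + x

def codes (n : ℕ) (t : Tr) : List ℕ := [cd n t.1 t.2.1, cd n t.1 t.2.2, cd n t.2.1 t.2.2]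

def allCodes (v g h : ℕ) (c0 c1 : List Tr) : List ℕ :=
  (List.range (2 * h)).flatMap fun i => (kl v g h c0 c1 i).flatMap (codes (2 * v))

def bitsOK (n m : ℕ) : Bool :=
  (!(Nat.beq m 0)) && (List.range n).all fun a => (List.range n).all fun b =>
    Nat.ble a 0 || (Nat.ble b a || !(Nat.beq (Nat.land (Nat.shiftRight m (a * n + b)) 1) 0))

def insAll : List (List ℕ) → ℕ → ℕ
  | [], m => m
  | l :: ls, m =>
    match ins l m with
    | 0 => 0
    | k + 1 => insAll ls (k + 1)

def chkB (v g h : ℕ) (c0 c1 : List Tr) : Bool :=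
  match insAll ((List.range (2 * h)).map fun i =>
    (kl v g h c0 c1 i).flatMap (codes (2 * v))) 1 with
  | 0 => false
  | k + 1 => bitsOK (2 * v) (k + 1)

theorem ins_append : ∀ (a b : List ℕ) (m : ℕ), ins a m ≠ 0 → ins (a ++ b) m = ins b (ins a m)
  | [], _, _, _ => rfl
  | x :: xs, b, m, h => by
    rw [ins] at h
    rw [List.cons_append, ins, ins]
    cases hb : Nat.beq (Nat.land (Nat.shiftRight m x) 1) 0
    · rw [hb] at h; simp at h
    · rw [hb] at h
      simp only [cond_true] at h ⊢
      exact ins_append xs b _ h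

theorem insAll_eq : ∀ (ls : List (List ℕ)) (m : ℕ), insAll ls m ≠ 0 →
    ins ls.flatten m = insAll ls m
  | [], _, _ => rfl
  | l :: ls, m, h => by
    rw [insAll] at h ⊢
    rw [List.flatten_cons]
    cases e : ins l m with
    | zero => rw [e] at h; simp at h
    | succ k =>
      rw [e] at h
      simp only at h ⊢
      rw [ins_append _ _ _ (by rw [e]; omega), e]
      exact insAll_eq ls _ h

theorem chkB_spec {v g h : ℕ} {c0 c1 : List Tr} (hB : chkB v g h c0 c1 = true) :
    bitsOK (2 * v) (ins (allCodes v g h c0 c1) 1) = true := by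
  unfold chkB at hB
  have key := insAll_eq ((List.range (2 * h)).map fun i =>
    (kl v g h c0 c1 i).flatMap (codes (2 * v))) 1
  cases e : insAll ((List.range (2 * h)).map fun i =>
      (kl v g h c0 c1 i).flatMap (codes (2 * v))) 1 with
  | zero => rw [e] at hB; simp at hB
  | succ k =>
    rw [e] at hB key
    simp only at hB
    have k2 := key (by omega)
    rw [← List.flatMap_def] at k2
    unfold allCodes
    rw [k2]
    exact hB

def memT (x : ℕ) (t : Tr) : Bool := Nat.beq x t.1 || (Nat.beq x t.2.1 || Nat.beq x t.2.2)

def same (s t : Tr) : Bool :=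
  (memT s.1 t && (memT s.2.1 t && memT s.2.2 t)) && (memT t.1 s && (memT t.2.1 s && memT t.2.2 s))

def invc (v m : ℕ) (c : List Tr) : Bool := c.all fun t => c.any fun t' => same (mt v m t) t'

def cl (v g : ℕ) (C : List Tr) (t : Tr) (c : ℕ × ℕ) : Bool :=
  match C[c.2]? with
  | none => false
  | some t' => same (ph v t.1 0, ph v t.1 t.2.1, ph v t.1 t.2.2) (mt v (g ^ c.1) t')

def allc (v g : ℕ) (C : List Tr) : List Tr → List (ℕ × ℕ) → Bool
  | [], _ => true
  | _ :: _, [] => false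
  | t :: ts, c :: cs => cl v g C t c && allc v g C ts cs

def rots (t : Tr) : List Tr := [(t.1, t.2.1, t.2.2), (t.2.1, t.1, t.2.2), (t.2.2, t.1, t.2.1)]

theorem memT_iff (x : ℕ) (t : Tr) : memT x t = true ↔ x ∈ toS t := by
  simp [memT, toS]

theorem same_eq {s t : Tr} (h : same s t = true) : toS s = toS t := by
  simp only [same, Bool.and_eq_true, memT_iff] at h
  obtain ⟨⟨a, b, c⟩, d, e, f⟩ := h
  apply Finset.Subset.antisymm
  · intro x hx
    simp only [toS, Finset.mem_insert, Finset.mem_singleton] at hx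
    rcases hx with rfl | rfl | rfl <;> assumption
  · intro x hx
    simp only [toS, Finset.mem_insert, Finset.mem_singleton] at hx
    rcases hx with rfl | rfl | rfl <;> assumption

theorem allc_spec (v g : ℕ) (C : List Tr) : ∀ (l : List Tr) (cs : List (ℕ × ℕ)),
    allc v g C l cs = true → ∀ t ∈ l, ∃ t' ∈ C, ∃ j,
      toS (ph v t.1 0, ph v t.1 t.2.1, ph v t.1 t.2.2) = toS (mt v (g ^ j) t')
  | [], _, _ => by simp
  | _ :: _, [], h => by simp [allc] at h
  | t :: ts, c :: cs, h => by
    simp only [allc, Bool.and_eq_true] at h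
    intro s hs
    rcases List.mem_cons.1 hs with rfl | hs
    · have h1 := h.1
      unfold cl at h1
      cases hc : C[c.2]? with
      | none => rw [hc] at h1; simp at h1
      | some t' =>
        rw [hc] at h1
        exact ⟨t', List.mem_of_getElem? hc, c.1, same_eq h1⟩
    · exact allc_spec v g C ts cs h.2 s hs

theorem mt_mt {v : ℕ} (hv : 0 < v) (m m' : ℕ) (t : Tr) : mt v m (mt v m' t) = mt v (m * m') t := by
  simp [mt, mu_mu hv]

theorem toS_mt_congr (v m : ℕ) {s t : Tr} (h : toS s = toS t) :
    toS (mt v m s) = toS (mt v m t) := by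
  rw [toS_mt, toS_mt, h]

theorem red {v g h : ℕ} (hv : 0 < v) (hh : 0 < h) {c : List Tr} (hc : invc v (g ^ h) c = true) :
    ∀ k, ∀ t ∈ c, ∃ j < h, ∃ t' ∈ c, toS (mt v (g ^ k) t) = toS (mt v (g ^ j) t') := by
  intro k
  induction k using Nat.strong_induction_on with
  | _ k ih =>
    intro t ht
    by_cases hk : k < h
    · exact ⟨k, hk, t, ht, rfl⟩
    · simp only [invc, List.all_eq_true, List.any_eq_true] at hc
      obtain ⟨t', ht', e⟩ := hc t ht
      obtain ⟨j, hj, t'', ht'', e'⟩ := ih (k - h) (by omega) t' ht'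
      refine ⟨j, hj, t'', ht'', ?_⟩
      rw [← e', ← toS_mt_congr v _ (same_eq e), mt_mt hv, ← pow_add, Nat.sub_add_cancel (by omega)]

theorem cd_comm (n x y : ℕ) : cd n x y = cd n y x := by
  unfold cd
  rcases lt_trichotomy x y with h | h | h
  · have h1 : Nat.ble x y = true := by rw [Nat.ble_eq]; omega
    have h2 : Nat.ble y x = false := by rw [← Bool.not_eq_true, Nat.ble_eq]; omega
    simp [h1, h2]
  · rw [h]
  · have h1 : Nat.ble y x = true := by rw [Nat.ble_eq]; omega
    have h2 : Nat.ble x y = false := by rw [← Bool.not_eq_true, Nat.ble_eq]; omega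
    simp [h1, h2]

theorem cd_mem (n : ℕ) {t : Tr} {a b : ℕ} (ha : a ∈ toS t) (hb : b ∈ toS t) (hab : a ≠ b) :
    cd n a b ∈ codes n t := by
  simp only [toS, Finset.mem_insert, Finset.mem_singleton] at ha hb
  simp only [codes, List.mem_cons, List.not_mem_nil, or_false]
  rcases ha with rfl | rfl | rfl <;> rcases hb with rfl | rfl | rfl <;>
    first
    | exact absurd rfl hab
    | simp
    | (rw [cd_comm]; simp)

theorem enc_inj {n a b x y : ℕ} (hb : b < n) (hy : y < n) (h : a * n + b = x * n + y) :
    a = x ∧ b = y := by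
  have hn : 0 < n := by omega
  have h1 := congrArg (fun z => z / n) h
  have h2 := congrArg (fun z => z % n) h
  simp only [Nat.mul_comm _ n, Nat.mul_add_div hn, Nat.mul_add_mod, Nat.div_eq_of_lt hb,
    Nat.div_eq_of_lt hy, Nat.mod_eq_of_lt hb, Nat.mod_eq_of_lt hy, add_zero] at h1 h2
  exact ⟨h1, h2⟩

theorem cd_inv {n a b x y : ℕ} (hb : b < n) (hx : x < n) (hy : y < n)
    (h : cd n x y = a * n + b) : (a = x ∧ b = y) ∨ (a = y ∧ b = x) := by
  unfold cd at h
  cases hh : Nat.ble x y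
  · rw [hh] at h; simp only [cond_false] at h
    exact Or.inr (enc_inj hb hx h.symm)
  · rw [hh] at h; simp only [cond_true] at h
    exact Or.inl (enc_inj hb hy h.symm)

theorem gen (v g h : ℕ) (c0 c1 : List Tr) (cs : List (ℕ × ℕ)) (hv : 0 < v) (hh : 0 < h)
    (hA : chkA v g h c0 c1 = true) (hB : chkB v g h c0 c1 = true)
    (hC : allc v g (c0 ++ c1) ((c0 ++ c1).flatMap rots) cs = true)
    (hD0 : invc v (g ^ h) c0 = true) (hD1 : invc v (g ^ h) c1 = true) :
    ExistsRDS 3 4 (2 * v) := by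
  have hA' : ∀ i < 2 * h, ((kl v g h c0 c1 i).flatMap pts).Nodup ∧
      ∀ y, y ∈ (kl v g h c0 c1 i).flatMap pts ↔ 0 < y ∧ y < 2 * v := by
    intro i hi
    simp only [chkA, List.all_eq_true, List.mem_range] at hA
    have e := Nat.eq_of_beq_eq_true (hA i hi)
    have hne : ins ((kl v g h c0 c1 i).flatMap pts) 1 ≠ 0 := by
      rw [e]
      have : 2 ^ 1 ≤ 2 ^ (2 * v) := Nat.pow_le_pow_right (by norm_num) (by omega)
      omega
    obtain ⟨h1, h2, h3⟩ := ins_spec _ _ hne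
    refine ⟨h1, fun y => ?_⟩
    have k := h3 y
    rw [e, Nat.testBit_two_pow_sub_one] at k
    simp only [decide_eq_true_eq, Nat.testBit_one_eq_true_iff_self_eq_zero] at k
    constructor
    · intro hy
      refine ⟨?_, k.2 (Or.inr hy)⟩
      rcases Nat.eq_zero_or_pos y with rfl | hp
      · have := h2 0 hy; simp at this
      · exact hp
    · rintro ⟨hy1, hy2⟩
      rcases k.1 hy2 with h | h
      · omega
      · exact h
  replace hB := chkB_spec hB
  simp only [bitsOK, Bool.and_eq_true, Bool.not_eq_true', bit_eq, Bool.not_not] at hB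
  obtain ⟨hB1, hB2⟩ := hB
  have hne : ins (allCodes v g h c0 c1) 1 ≠ 0 := by
    intro h0; rw [h0] at hB1; simp at hB1
  obtain ⟨hN, -, hbit⟩ := ins_spec _ _ hne
  have hkl : ∀ i < 2 * h, ∀ t ∈ kl v g h c0 c1 i, ∀ y ∈ toS t, 0 < y ∧ y < 2 * v := by
    intro i hi t ht y hy
    exact ((hA' i hi).2 y).1 (List.mem_flatMap.2 ⟨t, ht, (mem_toS t y).1 hy⟩)
  have hnd : ∀ i < 2 * h, ∀ t ∈ kl v g h c0 c1 i, (pts t).Nodup := fun i hi t ht =>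
    (List.nodup_flatMap.1 (hA' i hi).1).1 t ht
  have hmem : ∀ (j : ℕ) (t' : Tr), t' ∈ c0 ++ c1 → ∃ i < 2 * h, ∃ s ∈ kl v g h c0 c1 i,
      toS s = toS (mt v (g ^ j) t') := by
    intro k t' ht'
    rcases List.mem_append.1 ht' with ht' | ht'
    · obtain ⟨j, hj, t'', ht'', e⟩ := red hv hh hD0 k t' ht'
      refine ⟨j, by omega, mt v (g ^ j) t'', ?_, e.symm⟩
      have : Nat.ble (j + 1) h = true := by rw [Nat.ble_eq]; omega
      simp only [kl, this, cond_true]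
      exact List.mem_map_of_mem ht''
    · obtain ⟨j, hj, t'', ht'', e⟩ := red hv hh hD1 k t' ht'
      refine ⟨j + h, by omega, mt v (g ^ j) t'', ?_, e.symm⟩
      have : Nat.ble (j + h + 1) h = false := by rw [← Bool.not_eq_true, Nat.ble_eq]; omega
      simp only [kl, this, cond_false, Nat.add_sub_cancel]
      exact List.mem_map_of_mem ht''
  have hbase : ∀ i < 2 * h, ∀ t ∈ kl v g h c0 c1 i, ∃ j, ∃ t' ∈ c0 ++ c1,
      t = mt v (g ^ j) t' := by
    intro i hi t ht
    unfold kl at ht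
    cases hc : Nat.ble (i + 1) h
    · rw [hc] at ht
      simp only [cond_false, List.mem_map] at ht
      obtain ⟨a, ha, rfl⟩ := ht
      exact ⟨_, a, List.mem_append.2 (Or.inr ha), rfl⟩
    · rw [hc] at ht
      simp only [cond_true, List.mem_map] at ht
      obtain ⟨a, ha, rfl⟩ := ht
      exact ⟨_, a, List.mem_append.2 (Or.inl ha), rfl⟩
  -- base points are in range
  have hbr : ∀ t ∈ c0 ++ c1, ∀ y ∈ toS t, y < 2 * v := by
    intro t ht y hy
    obtain ⟨i, hi, s, hs, e⟩ := hmem 0 t ht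
    have : mu v (g ^ 0) y ∈ toS s := by
      rw [e, toS_mt]; exact Finset.mem_image_of_mem _ hy
    have h2 := (hkl i hi s hs _ this).2
    have h3 : mu v (g ^ 0) y = y := by
      apply ptExt (v := v)
      · rw [mu_cast]; simp
      · rw [mu_lay hv]
    rwa [h3] at h2
  have hPm : ∀ (i : ℕ) (T : Finset ℕ), T ∈ ((kl v g h c0 c1 i).map toS).toFinset ↔
      ∃ t ∈ kl v g h c0 c1 i, toS t = T := by
    intro i T
    simp only [List.mem_toFinset, List.mem_map]
  have hU1 : ∀ i < 2 * h, ∀ t ∈ kl v g h c0 c1 i, ∀ t' ∈ kl v g h c0 c1 i, ∀ y ∈ toS t,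
      y ∈ toS t' → t = t' := by
    intro i hi t ht t' ht' y hy hy'
    exact fm_uniq (hA' i hi).1 ht ht' ((mem_toS _ _).1 hy) ((mem_toS _ _).1 hy')
  refine core (2 * v) (by omega) (ph v) (ph_lt hv) (ph_self hv) (ph_inj hv) (ph_law hv) (2 * h)
    (fun i => ((kl v g h c0 c1 i).map toS).toFinset) ?_ ?_ ?_ ?_ ?_
  · rintro ⟨i, hi⟩ T hT
    obtain ⟨t, ht, rfl⟩ := (hPm i T).1 hT
    refine ⟨?_, hkl i hi t ht⟩
    have hn := hnd i hi t ht
    have e : toS t = (pts t).toFinset := by ext y; rw [mem_toS, List.mem_toFinset]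
    rw [e, List.toFinset_card_of_nodup hn]; rfl
  · rintro ⟨i, hi⟩ y h1 h2
    obtain ⟨t, ht, hy⟩ := List.mem_flatMap.1 (((hA' i hi).2 y).2 ⟨h1, h2⟩)
    refine ⟨toS t, ⟨(hPm i _).2 ⟨t, ht, rfl⟩, (mem_toS _ _).2 hy⟩, ?_⟩
    rintro T ⟨hT, hyT⟩
    obtain ⟨t', ht', rfl⟩ := (hPm i T).1 hT
    rw [hU1 i hi t ht t' ht' y ((mem_toS _ _).2 hy) hyT]
  · intro a b ha hab hb
    have k := List.all_eq_true.1 hB2 a (List.mem_range.2 (by omega))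
    have k2 := List.all_eq_true.1 k b (List.mem_range.2 hb)
    have e1 : Nat.ble a 0 = false := by rw [← Bool.not_eq_true, Nat.ble_eq]; omega
    have e2 : Nat.ble b a = false := by rw [← Bool.not_eq_true, Nat.ble_eq]; omega
    rw [e1, e2, Bool.false_or, Bool.false_or] at k2
    rcases (hbit _).1 k2 with k3 | k3
    · rw [Nat.testBit_one_eq_true_iff_self_eq_zero] at k3
      omega
    · simp only [allCodes, List.mem_flatMap, List.mem_range] at k3
      obtain ⟨i, hi, t, ht, hc⟩ := k3
      have r := hkl i hi t ht
      have m1 : t.1 ∈ toS t := by simp [toS]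
      have m2 : t.2.1 ∈ toS t := by simp [toS]
      have m3 : t.2.2 ∈ toS t := by simp [toS]
      refine ⟨⟨i, hi⟩, toS t, (hPm i _).2 ⟨t, ht, rfl⟩, ?_⟩
      simp only [codes, List.mem_cons, List.not_mem_nil, or_false] at hc
      have fin : ∀ x ∈ toS t, ∀ y ∈ toS t, a * (2 * v) + b = cd (2 * v) x y →
          a ∈ toS t ∧ b ∈ toS t := by
        intro x hx y hy e
        rcases cd_inv hb (r x hx).2 (r y hy).2 e.symm with ⟨rfl, rfl⟩ | ⟨rfl, rfl⟩
        · exact ⟨hx, hy⟩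
        · exact ⟨hy, hx⟩
      rcases hc with hc | hc | hc
      · exact fin _ m1 _ m2 hc
      · exact fin _ m1 _ m3 hc
      · exact fin _ m2 _ m3 hc
  · rintro ⟨i, hi⟩ ⟨j, hj⟩ T hT T' hT' a ha b hb hab ha' hb'
    obtain ⟨t, ht, rfl⟩ := (hPm i T).1 hT
    obtain ⟨t', ht', rfl⟩ := (hPm j T').1 hT'
    have hij : i = j := fm_uniq hN (List.mem_range.2 hi) (List.mem_range.2 hj)
      (List.mem_flatMap.2 ⟨t, ht, cd_mem _ ha hb hab⟩)
      (List.mem_flatMap.2 ⟨t', ht', cd_mem _ ha' hb' hab⟩)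
    subst hij
    exact ⟨rfl, by rw [hU1 i hi t ht t' ht' a ha ha']⟩
  · rintro ⟨i, hi⟩ T hT p hp
    obtain ⟨t, ht, rfl⟩ := (hPm i T).1 hT
    obtain ⟨j, s, hs, e⟩ := hbase i hi t ht
    have hn := hnd i hi t ht
    have hr := hkl i hi t ht
    have hsr := hbr s hs
    -- choose a rotation
    have hrot : ∃ u ∈ rots s, toS (mt v (g ^ j) u) = toS t ∧ mu v (g ^ j) u.1 = p ∧
        toS u = toS s := by
      rw [e] at hp
      simp only [toS, mt, Finset.mem_insert, Finset.mem_singleton] at hp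
      rcases hp with hp | hp | hp
      · exact ⟨(s.1, s.2.1, s.2.2), by simp [rots], by rw [e], hp.symm, rfl⟩
      · refine ⟨(s.2.1, s.1, s.2.2), by simp [rots], ?_, hp.symm, ?_⟩
        · rw [e]; ext y; simp only [toS, mt, Finset.mem_insert, Finset.mem_singleton]; tauto
        · ext y; simp only [toS, Finset.mem_insert, Finset.mem_singleton]; tauto
      · refine ⟨(s.2.2, s.1, s.2.1), by simp [rots], ?_, hp.symm, ?_⟩
        · rw [e]; ext y; simp only [toS, mt, Finset.mem_insert, Finset.mem_singleton]; tauto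
        · ext y; simp only [toS, Finset.mem_insert, Finset.mem_singleton]; tauto
    obtain ⟨u, hu, hut, hup, hus⟩ := hrot
    obtain ⟨t', ht', k, hk⟩ := allc_spec _ _ _ _ _ hC u (List.mem_flatMap.2 ⟨s, hs, hu⟩)
    obtain ⟨i', hi', w, hw, hww⟩ := hmem (j + k) t' ht'
    refine ⟨⟨i', hi'⟩, (hPm i' _).2 ⟨w, hw, ?_⟩⟩
    have hu1 : u.1 < 2 * v := hsr _ (by rw [← hus]; simp [toS])
    have hu2 : u.2.1 < 2 * v := hsr _ (by rw [← hus]; simp [toS])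
    have hu3 : u.2.2 < 2 * v := hsr _ (by rw [← hus]; simp [toS])
    rw [← hut, hww, pow_add, ← mt_mt hv, ← toS_mt_congr v _ hk]
    simp only [toS, mt]
    rw [← mu_ph hv _ hu1 (by omega), ← mu_ph hv _ hu1 hu2, ← mu_ph hv _ hu1 hu3, mu_zero, hup]
    have hcard : (toS t).card = 3 := by
      have e : toS t = (pts t).toFinset := by ext y; rw [mem_toS, List.mem_toFinset]
      rw [e, List.toFinset_card_of_nodup hn]; rfl
    rw [← hut] at hcard hr
    simp only [toS, mt, hup] at hcard hr ⊢
    generalize mu v (g ^ j) u.2.1 = q at *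
    generalize mu v (g ^ j) u.2.2 = r at *
    have hp0 := hr p (by simp)
    have hq0 := hr q (by simp)
    have hr0 := hr r (by simp)
    have hpq : p ≠ q := by
      rintro rfl
      have := Finset.card_le_two (a := p) (b := r)
      rw [Finset.insert_idem] at hcard; omega
    have hpr : p ≠ r := by
      rintro rfl
      have := Finset.card_le_two (a := q) (b := p)
      have e : ({p, q, p} : Finset ℕ) = {q, p} := by ext; simp
      rw [e] at hcard; omega
    have z1 : ph v p 0 ≠ 0 := fun h0 => by
      have := ph_inj hv p hp0.2 0 (by omega) p hp0.2 (by rw [h0, ph_self hv p hp0.2]); omega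
    have z2 : ph v p q ≠ 0 := fun h0 => hpq
      (ph_inj hv p hp0.2 q hq0.2 p hp0.2 (by rw [h0, ph_self hv p hp0.2])).symm
    have z3 : ph v p r ≠ 0 := fun h0 => hpr
      (ph_inj hv p hp0.2 r hr0.2 p hp0.2 (by rw [h0, ph_self hv p hp0.2])).symm
    have zs := ph_self hv p hp0.2
    ext y
    simp only [Finset.image_insert, Finset.image_singleton, Finset.mem_erase, Finset.mem_insert,
      Finset.mem_singleton, zs]
    constructor
    · rintro (rfl | rfl | rfl) <;> simp [z1, z2, z3]
    · rintro ⟨h1, h2⟩; tauto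

end RDSQSAux


namespace RDSQSAux

def a23 : List Tr :=
  [(4, 25, 39), (8, 33, 45), (26, 35, 40), (2, 36, 38), (13, 14, 28), (15, 17, 21), (1, 19, 23),
   (18, 27, 42), (5, 31, 37), (3, 20, 24), (6, 30, 34), (10, 12, 22), (7, 41, 44), (11, 32, 43),
   (9, 16, 29)]

def b23 : List Tr :=
  [(17, 30, 35), (12, 14, 34), (3, 28, 29), (11, 26, 44), (23, 24, 40), (4, 5, 27), (19, 21, 37),
   (38, 42, 45), (16, 22, 33), (2, 7, 9), (10, 25, 41), (1, 6, 18), (13, 32, 39), (15, 31, 36),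
   (8, 20, 43)]

def s23 : List (ℕ × ℕ) :=
  [(7, 8), (10, 7), (9, 25), (4, 18), (6, 12), (1, 10), (8, 9), (1, 14), (4, 21), (2, 13),
   (2, 13), (0, 3), (7, 23), (6, 16), (3, 22), (3, 26), (8, 24), (2, 11), (3, 29), (0, 20),
   (2, 19), (10, 25), (1, 0), (8, 8), (4, 0), (2, 25), (3, 7), (7, 21), (4, 14), (3, 2), (5, 12),
   (3, 18), (10, 1), (1, 26), (9, 5), (6, 24), (6, 10), (9, 18), (5, 1), (9, 3), (9, 3), (0, 13),
   (3, 21), (7, 9), (10, 2), (2, 27), (9, 17), (3, 28), (5, 4), (1, 23), (8, 22), (5, 28),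
   (2, 15), (4, 27), (7, 1), (2, 12), (8, 10), (9, 6), (9, 20), (1, 29), (0, 6), (3, 29),
   (2, 19), (8, 14), (4, 9), (7, 2), (8, 4), (3, 16), (4, 23), (10, 16), (4, 4), (7, 22), (3, 5),
   (6, 26), (5, 11), (1, 7), (9, 8), (2, 0), (8, 5), (5, 24), (10, 11), (9, 15), (7, 17),
   (1, 28), (6, 17), (10, 27), (8, 15), (8, 20), (8, 6), (10, 19)]

theorem ex23 : ExistsRDS 3 4 (2 * 23) :=
  gen 23 2 11 a23 b23 s23 (by norm_num) (by norm_num) (by decide +kernel) (by decide +kernel)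
    (by decide +kernel) (by decide +kernel) (by decide +kernel)

def a29 : List Tr :=
  [(1, 28, 29), (2, 9, 32), (27, 20, 55), (4, 24, 54), (25, 5, 33), (16, 43, 56), (13, 44, 31),
   (7, 15, 21), (22, 14, 8), (19, 36, 46), (10, 51, 41), (12, 45, 57), (17, 42, 30), (6, 47, 53),
   (23, 40, 34), (3, 49, 52), (26, 38, 35), (18, 37, 48), (11, 50, 39)]

def b29 : List Tr :=
  [(29, 30, 57), (33, 38, 56), (54, 49, 31), (41, 53, 55), (46, 34, 32), (8, 43, 52),
   (21, 44, 35), (1, 12, 18), (28, 17, 11), (23, 24, 51), (6, 5, 36), (7, 19, 40), (22, 10, 47),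
   (14, 27, 48), (15, 2, 39), (3, 16, 45), (26, 13, 42), (4, 9, 37), (25, 20, 50)]

def s29 : List (ℕ × ℕ) :=
  [(10, 34), (10, 35), (0, 19), (3, 30), (11, 32), (4, 21), (3, 31), (11, 33), (4, 20), (0, 37),
   (2, 28), (9, 22), (0, 36), (2, 29), (9, 23), (11, 11), (0, 5), (11, 11), (11, 12), (0, 6),
   (11, 12), (0, 8), (6, 26), (6, 27), (0, 7), (6, 27), (6, 26), (12, 17), (0, 9), (12, 17),
   (12, 18), (0, 10), (12, 18), (3, 6), (3, 6), (0, 11), (3, 5), (3, 5), (0, 12), (1, 16),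
   (1, 16), (0, 13), (1, 15), (1, 15), (0, 14), (13, 13), (13, 13), (0, 15), (13, 14), (13, 14),
   (0, 16), (2, 10), (0, 17), (2, 10), (2, 9), (0, 18), (2, 9), (0, 0), (10, 35), (10, 34),
   (7, 33), (13, 30), (10, 1), (7, 32), (13, 31), (10, 2), (5, 4), (5, 36), (7, 29), (5, 3),
   (5, 37), (7, 28), (0, 25), (7, 25), (7, 24), (0, 24), (7, 24), (7, 25), (0, 27), (8, 8),
   (8, 7), (0, 26), (8, 7), (8, 8), (12, 4), (12, 36), (7, 22), (12, 3), (12, 37), (7, 23),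
   (11, 2), (8, 32), (1, 21), (11, 1), (8, 33), (1, 20), (3, 2), (6, 31), (7, 20), (3, 1),
   (6, 30), (7, 21), (0, 35), (4, 0), (4, 19), (0, 34), (4, 0), (4, 19), (0, 4), (2, 29),
   (9, 23), (0, 3), (2, 28), (9, 22)]

theorem ex29 : ExistsRDS 3 4 (2 * 29) :=
  gen 29 2 14 a29 b29 s29 (by norm_num) (by norm_num) (by decide +kernel) (by decide +kernel)
    (by decide +kernel) (by decide +kernel) (by decide +kernel)

def a41 : List Tr :=
  [(1, 40, 41), (39, 57, 70), (2, 66, 53), (25, 61, 80), (16, 62, 43), (27, 65, 67),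
   (14, 58, 56), (34, 59, 79), (7, 64, 44), (28, 68, 77), (13, 55, 46), (19, 47, 54),
   (22, 76, 69), (10, 20, 51), (31, 21, 72), (4, 6, 42), (37, 35, 81), (11, 73, 78),
   (30, 50, 45), (33, 49, 63), (8, 74, 60), (5, 29, 52), (36, 12, 71), (3, 18, 48), (38, 23, 75),
   (9, 15, 24), (32, 26, 17)]

def b41 : List Tr :=
  [(41, 42, 81), (43, 44, 77), (80, 79, 46), (11, 47, 70), (30, 76, 53), (24, 28, 72),
   (17, 13, 51), (59, 60, 62), (64, 63, 61), (27, 73, 74), (14, 50, 49), (19, 66, 75),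
   (22, 57, 48), (29, 58, 78), (12, 65, 45), (8, 34, 55), (33, 7, 68), (10, 36, 69), (31, 5, 54),
   (3, 4, 40), (38, 37, 1), (6, 15, 32), (35, 26, 9), (2, 21, 23), (39, 20, 18), (25, 56, 71),
   (16, 67, 52)]

def s41 : List (ℕ × ℕ) :=
  [(12, 13), (12, 14), (0, 27), (2, 4), (6, 36), (12, 7), (2, 3), (6, 37), (12, 8), (18, 1),
   (4, 37), (10, 8), (18, 2), (4, 36), (10, 7), (16, 38), (3, 17), (15, 9), (16, 39), (3, 18),
   (15, 10), (14, 37), (10, 3), (8, 2), (14, 36), (10, 4), (8, 1), (8, 18), (1, 38), (5, 6),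
   (8, 17), (1, 39), (5, 5), (0, 12), (10, 11), (10, 12), (0, 11), (10, 12), (10, 11), (8, 0),
   (0, 14), (8, 27), (8, 0), (0, 13), (8, 27), (4, 45), (19, 22), (6, 35), (4, 44), (19, 21),
   (6, 34), (12, 9), (17, 6), (13, 38), (12, 10), (17, 5), (13, 39), (11, 41), (1, 52), (2, 31),
   (11, 40), (1, 53), (2, 30), (1, 15), (5, 45), (7, 35), (1, 16), (5, 44), (7, 34), (4, 33),
   (18, 43), (17, 29), (4, 32), (18, 42), (17, 28), (0, 48), (0, 49), (0, 26), (0, 49), (0, 48),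
   (0, 25), (0, 0), (12, 14), (12, 13), (1, 42), (7, 33), (3, 23), (1, 43), (7, 32), (3, 24),
   (19, 52), (9, 40), (18, 19), (19, 53), (9, 41), (18, 20), (14, 42), (16, 23), (13, 28),
   (14, 43), (16, 24), (13, 29), (13, 21), (18, 45), (14, 15), (13, 22), (18, 44), (14, 16),
   (6, 7), (16, 3), (14, 2), (6, 8), (16, 4), (14, 1), (4, 6), (19, 10), (7, 18), (4, 5),
   (19, 9), (7, 17), (9, 19), (10, 52), (11, 31), (9, 20), (10, 53), (11, 30), (2, 23), (6, 33),
   (19, 29), (2, 24), (6, 32), (19, 28), (16, 15), (15, 21), (2, 34), (16, 16), (15, 22),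
   (2, 35), (0, 47), (6, 50), (6, 51), (0, 46), (6, 51), (6, 50), (0, 49), (0, 26), (0, 25),
   (0, 48), (0, 25), (0, 26), (14, 47), (14, 46), (0, 51), (14, 46), (14, 47), (0, 50), (1, 31),
   (19, 20), (10, 41), (1, 30), (19, 19), (10, 40)]

theorem ex41 : ExistsRDS 3 4 (2 * 41) :=
  gen 41 6 20 a41 b41 s41 (by norm_num) (by norm_num) (by decide +kernel) (by decide +kernel)
    (by decide +kernel) (by decide +kernel) (by decide +kernel)

def a47 : List Tr :=
  [(1, 46, 47), (2, 75, 88), (45, 51, 53), (39, 21, 66), (41, 90, 84), (8, 13, 57), (6, 26, 34),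
   (37, 44, 79), (10, 3, 62), (18, 32, 42), (29, 15, 5), (4, 65, 83), (43, 76, 58), (9, 36, 78),
   (38, 11, 63), (7, 27, 74), (40, 20, 67), (24, 80, 85), (23, 61, 56), (14, 48, 81),
   (33, 93, 60), (17, 31, 55), (30, 16, 86), (12, 69, 82), (35, 72, 59), (28, 54, 73),
   (19, 87, 68), (25, 49, 70), (22, 92, 71), (50, 77, 89), (91, 64, 52)]

def b47 : List Tr :=
  [(47, 48, 93), (32, 49, 81), (15, 69, 92), (46, 60, 90), (14, 72, 86), (44, 1, 55),
   (25, 51, 91), (21, 33, 50), (26, 22, 3), (61, 70, 73), (80, 71, 68), (27, 35, 77),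
   (20, 12, 64), (37, 75, 85), (10, 66, 56), (4, 5, 74), (43, 42, 67), (6, 28, 87), (41, 19, 54),
   (18, 45, 89), (29, 2, 52), (7, 8, 30), (40, 39, 17), (9, 63, 65), (38, 78, 76), (36, 62, 88),
   (11, 79, 53), (16, 24, 34), (31, 23, 13), (57, 59, 83), (84, 82, 58)]

def s47 : List (ℕ × ℕ) :=
  [(12, 16), (12, 15), (0, 31), (1, 34), (12, 37), (2, 33), (19, 32), (0, 2), (19, 32), (5, 43),
   (15, 51), (5, 30), (10, 44), (10, 44), (0, 4), (12, 49), (15, 13), (11, 40), (8, 53), (4, 58),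
   (21, 10), (6, 21), (10, 47), (11, 60), (6, 22), (10, 46), (11, 61), (10, 52), (6, 59),
   (14, 39), (10, 53), (6, 58), (2, 6), (8, 57), (18, 24), (1, 54), (8, 56), (18, 23), (1, 55),
   (8, 5), (20, 49), (19, 40), (15, 36), (20, 48), (19, 41), (0, 16), (11, 0), (11, 31), (0, 15),
   (11, 0), (11, 31), (0, 18), (14, 27), (14, 28), (0, 17), (14, 28), (14, 27), (22, 26),
   (0, 19), (22, 26), (22, 25), (0, 20), (22, 25), (4, 47), (17, 7), (5, 60), (4, 46), (17, 8),
   (5, 61), (6, 55), (13, 56), (5, 12), (6, 54), (13, 57), (5, 11), (1, 20), (0, 25), (1, 20),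
   (1, 19), (0, 26), (1, 19), (0, 28), (9, 18), (9, 17), (0, 27), (9, 17), (9, 18), (10, 50),
   (0, 42), (13, 38), (10, 51), (0, 43), (18, 3), (0, 0), (12, 15), (12, 16), (4, 2), (4, 2),
   (0, 32), (10, 37), (21, 1), (22, 34), (22, 1), (11, 37), (1, 33), (3, 45), (3, 45), (0, 35),
   (5, 48), (8, 14), (4, 41), (13, 33), (11, 1), (12, 34), (10, 42), (20, 50), (10, 29),
   (19, 52), (9, 9), (15, 59), (1, 49), (12, 5), (4, 13), (1, 48), (19, 36), (4, 14), (10, 50),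
   (13, 38), (0, 29), (10, 51), (18, 3), (0, 30), (13, 4), (0, 44), (13, 4), (20, 35), (0, 45),
   (20, 35), (19, 22), (13, 8), (1, 61), (19, 21), (13, 7), (1, 60), (3, 14), (18, 36), (22, 41),
   (3, 13), (11, 5), (22, 40), (3, 38), (13, 42), (13, 29), (8, 3), (13, 43), (13, 30), (4, 39),
   (19, 59), (13, 9), (15, 6), (19, 58), (13, 10), (17, 24), (7, 57), (22, 11), (17, 23),
   (7, 56), (22, 12), (15, 12), (10, 23), (16, 55), (15, 11), (10, 24), (16, 54), (19, 6),
   (17, 10), (4, 53), (8, 39), (17, 9), (4, 52), (22, 47), (18, 21), (12, 7), (22, 46), (18, 22),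
   (12, 8)]

theorem ex47 : ExistsRDS 3 4 (2 * 47) :=
  gen 47 2 23 a47 b47 s47 (by norm_num) (by norm_num) (by decide +kernel) (by decide +kernel)
    (by decide +kernel) (by decide +kernel) (by decide +kernel)

def a53 : List Tr :=
  [(1, 52, 53), (2, 8, 84), (51, 45, 75), (7, 13, 48), (46, 40, 5), (14, 55, 65), (39, 104, 94),
   (6, 71, 77), (47, 88, 82), (11, 22, 64), (42, 31, 95), (24, 38, 105), (29, 15, 54),
   (17, 18, 32), (36, 35, 21), (60, 67, 79), (99, 92, 80), (41, 43, 63), (12, 10, 96),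
   (23, 26, 57), (30, 27, 102), (16, 58, 74), (37, 101, 85), (33, 76, 89), (20, 83, 70),
   (28, 61, 86), (25, 98, 73), (34, 62, 78), (19, 97, 81), (3, 4, 68), (50, 49, 91),
   (44, 56, 100), (9, 103, 59), (66, 72, 90), (93, 87, 69)]

def b53 : List Tr :=
  [(53, 54, 105), (15, 56, 94), (38, 103, 65), (12, 68, 74), (41, 91, 85), (1, 59, 60),
   (52, 100, 99), (8, 86, 102), (45, 73, 57), (14, 34, 88), (39, 19, 71), (24, 27, 101),
   (29, 26, 58), (35, 84, 93), (18, 75, 66), (5, 21, 22), (48, 32, 31), (7, 11, 63),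
   (46, 42, 96), (23, 43, 49), (30, 10, 4), (2, 17, 98), (51, 36, 61), (6, 70, 76), (47, 89, 83),
   (13, 16, 50), (40, 37, 3), (44, 69, 81), (9, 90, 78), (28, 55, 80), (25, 104, 79),
   (33, 62, 77), (20, 97, 82), (64, 67, 72), (95, 92, 87)]

def s53 : List (ℕ × ℕ) :=
  [(20, 9), (20, 10), (0, 35), (17, 56), (1, 30), (9, 33), (17, 57), (1, 29), (9, 34), (9, 14),
   (22, 54), (14, 51), (9, 13), (22, 55), (14, 50), (0, 6), (11, 27), (11, 28), (0, 5), (11, 28),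
   (11, 27), (14, 22), (14, 22), (0, 7), (14, 21), (14, 21), (0, 8), (6, 0), (0, 10), (6, 35),
   (6, 0), (0, 9), (6, 35), (21, 47), (19, 17), (1, 15), (21, 46), (19, 18), (1, 16), (5, 50),
   (13, 55), (17, 3), (5, 51), (13, 54), (17, 4), (18, 17), (20, 47), (25, 12), (18, 18),
   (20, 46), (25, 11), (7, 12), (2, 47), (8, 16), (7, 11), (2, 46), (8, 15), (2, 44), (11, 53),
   (22, 69), (2, 45), (11, 52), (22, 68), (12, 7), (12, 7), (0, 21), (12, 8), (12, 8), (0, 22),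
   (20, 43), (15, 49), (5, 38), (20, 42), (15, 48), (5, 39), (4, 37), (0, 25), (4, 37), (4, 36),
   (0, 26), (4, 36), (0, 28), (15, 5), (15, 6), (0, 27), (15, 6), (15, 5), (16, 57), (25, 1),
   (8, 34), (16, 56), (25, 2), (8, 33), (18, 64), (18, 64), (0, 31), (18, 65), (18, 65), (0, 32),
   (17, 2), (8, 56), (18, 29), (17, 1), (8, 57), (18, 30), (0, 0), (20, 10), (20, 9), (22, 25),
   (0, 36), (22, 25), (22, 26), (0, 37), (22, 26), (10, 49), (15, 43), (21, 24), (10, 48),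
   (15, 42), (21, 23), (8, 58), (8, 58), (0, 40), (8, 59), (8, 59), (0, 41), (6, 23), (11, 38),
   (21, 49), (6, 24), (11, 39), (21, 48), (9, 53), (24, 20), (20, 69), (9, 52), (24, 19),
   (20, 68), (24, 17), (5, 11), (6, 15), (24, 18), (5, 12), (6, 16), (16, 38), (5, 42), (11, 23),
   (16, 39), (5, 43), (11, 24), (8, 55), (21, 14), (12, 3), (8, 54), (21, 13), (12, 4), (15, 19),
   (17, 44), (11, 68), (15, 20), (17, 45), (11, 69), (18, 50), (13, 13), (4, 4), (18, 51),
   (13, 14), (4, 3), (10, 29), (9, 2), (18, 34), (10, 30), (9, 1), (18, 33), (18, 41), (18, 41),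
   (0, 58), (18, 40), (18, 40), (0, 59), (0, 61), (13, 61), (13, 60), (0, 60), (13, 60),
   (13, 61), (0, 63), (22, 66), (22, 67), (0, 62), (22, 67), (22, 66), (8, 32), (0, 64), (8, 32),
   (8, 31), (0, 65), (8, 31), (0, 67), (4, 63), (4, 62), (0, 66), (4, 62), (4, 63), (4, 19),
   (6, 44), (15, 53), (4, 20), (6, 45), (15, 52)]

theorem ex53 : ExistsRDS 3 4 (2 * 53) :=
  gen 53 2 26 a53 b53 s53 (by norm_num) (by norm_num) (by decide +kernel) (by decide +kernel)
    (by decide +kernel) (by decide +kernel) (by decide +kernel)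

def a59 : List Tr :=
  [(21, 59, 80), (29, 38, 110), (8, 97, 88), (15, 30, 103), (67, 75, 83), (51, 94, 102),
   (44, 74, 89), (5, 6, 41), (54, 53, 18), (9, 22, 61), (50, 37, 116), (26, 27, 93),
   (33, 32, 84), (35, 66, 101), (24, 111, 76), (16, 56, 69), (43, 3, 108), (4, 19, 62),
   (55, 40, 115), (63, 82, 107), (114, 95, 70), (10, 46, 57), (49, 13, 2), (7, 11, 28),
   (52, 48, 31), (60, 68, 100), (117, 109, 77), (1, 12, 87), (58, 47, 90), (17, 65, 73),
   (42, 112, 104), (20, 91, 106), (39, 86, 71), (78, 81, 105), (99, 96, 72), (23, 45, 85),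
   (36, 14, 92), (25, 79, 113), (34, 98, 64)]

def b59 : List Tr :=
  [(40, 59, 99), (44, 19, 114), (4, 78, 103), (15, 81, 96), (8, 63, 71), (51, 55, 106),
   (22, 37, 74), (9, 12, 41), (50, 47, 18), (26, 28, 112), (33, 31, 65), (25, 38, 87),
   (34, 21, 90), (5, 11, 85), (54, 48, 92), (29, 35, 102), (30, 24, 75), (53, 93, 95),
   (6, 84, 82), (27, 39, 101), (32, 20, 76), (45, 57, 107), (14, 2, 70), (17, 46, 117),
   (42, 13, 60), (36, 58, 109), (23, 1, 68), (3, 79, 80), (56, 98, 97), (73, 86, 89),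
   (104, 91, 88), (7, 61, 64), (52, 116, 113), (49, 62, 105), (10, 115, 72), (16, 100, 111),
   (43, 77, 66), (83, 108, 110), (94, 69, 67)]

def s59 : List (ℕ × ℕ) :=
  [(18, 39), (18, 39), (0, 0), (2, 65), (3, 58), (18, 19), (18, 41), (3, 31), (3, 32), (18, 45),
   (15, 44), (26, 4), (3, 3), (21, 45), (18, 44), (3, 6), (0, 5), (3, 6), (26, 5), (0, 6),
   (26, 5), (11, 21), (14, 23), (18, 47), (11, 22), (14, 24), (18, 46), (15, 49), (12, 53),
   (1, 34), (15, 48), (12, 52), (1, 33), (15, 15), (5, 63), (2, 68), (15, 16), (5, 62), (2, 69),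
   (13, 38), (13, 38), (0, 13), (13, 37), (13, 37), (0, 14), (19, 63), (14, 11), (16, 68),
   (19, 62), (14, 12), (16, 69), (13, 36), (28, 61), (4, 77), (13, 35), (28, 60), (4, 76),
   (11, 1), (14, 58), (13, 65), (0, 40), (14, 59), (13, 64), (18, 7), (7, 47), (3, 23), (18, 8),
   (7, 46), (3, 24), (15, 7), (26, 21), (4, 47), (15, 8), (26, 22), (4, 46), (17, 27), (19, 50),
   (6, 55), (17, 28), (19, 51), (6, 54), (18, 55), (2, 50), (12, 25), (18, 54), (2, 51),
   (12, 26), (10, 75), (6, 56), (24, 67), (10, 74), (6, 57), (24, 66), (0, 32), (26, 2),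
   (15, 41), (0, 31), (15, 41), (26, 2), (28, 10), (14, 48), (11, 52), (28, 9), (14, 49),
   (11, 53), (15, 60), (16, 18), (20, 76), (15, 61), (16, 17), (20, 77), (16, 14), (0, 37),
   (16, 14), (16, 13), (0, 38), (16, 13), (11, 0), (11, 0), (0, 39), (13, 64), (14, 59), (0, 20),
   (11, 2), (14, 32), (14, 31), (26, 43), (26, 43), (0, 42), (3, 42), (3, 42), (0, 43), (14, 3),
   (3, 45), (11, 4), (26, 44), (11, 3), (8, 4), (11, 8), (25, 24), (22, 22), (11, 7), (25, 23),
   (22, 21), (14, 10), (26, 52), (15, 33), (14, 9), (26, 53), (15, 34), (16, 55), (27, 27),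
   (10, 25), (16, 54), (27, 28), (10, 26), (17, 10), (3, 48), (18, 33), (17, 9), (3, 49),
   (18, 34), (11, 28), (13, 51), (23, 26), (11, 27), (13, 50), (23, 25), (18, 67), (23, 29),
   (4, 75), (18, 66), (23, 30), (4, 74), (26, 1), (28, 65), (15, 19), (15, 40), (28, 64),
   (15, 20), (14, 35), (1, 18), (5, 76), (14, 36), (1, 17), (5, 77), (10, 16), (24, 12),
   (26, 69), (10, 15), (24, 11), (26, 68), (16, 40), (1, 59), (16, 20), (27, 1), (1, 58),
   (16, 19), (11, 57), (5, 30), (15, 74), (11, 56), (5, 29), (15, 75), (13, 15), (3, 63),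
   (27, 11), (13, 16), (3, 62), (27, 12), (0, 71), (20, 73), (20, 72), (0, 70), (20, 72),
   (20, 73), (0, 73), (9, 70), (9, 71), (0, 72), (9, 71), (9, 70), (19, 30), (14, 66), (25, 57),
   (19, 29), (14, 67), (25, 56), (25, 18), (24, 60), (9, 35), (25, 17), (24, 61), (9, 36)]

theorem ex59 : ExistsRDS 3 4 (2 * 59) :=
  gen 59 3 29 a59 b59 s59 (by norm_num) (by norm_num) (by decide +kernel) (by decide +kernel)
    (by decide +kernel) (by decide +kernel) (by decide +kernel)

def a71 : List Tr :=
  [(12, 71, 95), (59, 65, 118), (69, 22, 6), (2, 96, 98), (49, 76, 125), (32, 39, 117),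
   (88, 115, 137), (24, 58, 113), (47, 13, 100), (18, 19, 67), (53, 52, 4), (16, 25, 29),
   (55, 46, 42), (20, 109, 141), (51, 104, 72), (15, 36, 91), (56, 35, 122), (1, 26, 43),
   (70, 45, 28), (14, 48, 64), (57, 23, 7), (30, 89, 119), (41, 124, 94), (111, 121, 140),
   (102, 92, 73), (40, 85, 101), (31, 128, 112), (10, 123, 134), (61, 90, 79), (33, 37, 133),
   (38, 34, 80), (3, 81, 116), (68, 132, 97), (8, 9, 110), (63, 62, 103), (27, 74, 106),
   (44, 139, 107), (5, 87, 131), (66, 126, 82), (50, 105, 127), (21, 108, 86), (75, 83, 93),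
   (138, 130, 120), (54, 60, 84), (17, 11, 129), (114, 135, 136), (99, 78, 77)]

def b71 : List Tr :=
  [(44, 71, 93), (27, 98, 120), (69, 117, 115), (2, 7, 45), (39, 96, 135), (32, 64, 78),
   (26, 97, 116), (4, 80, 127), (67, 133, 86), (6, 73, 138), (65, 140, 75), (3, 102, 137),
   (68, 111, 76), (30, 114, 126), (41, 99, 87), (50, 74, 90), (21, 139, 123), (57, 108, 122),
   (14, 105, 91), (40, 106, 113), (31, 107, 100), (10, 83, 94), (61, 130, 119), (11, 48, 72),
   (60, 23, 141), (5, 58, 85), (66, 13, 128), (9, 104, 125), (62, 109, 88), (8, 56, 59),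
   (63, 15, 12), (34, 43, 70), (37, 28, 1), (24, 46, 53), (47, 25, 18), (38, 54, 124),
   (33, 17, 89), (20, 77, 121), (51, 136, 92), (19, 42, 95), (52, 29, 118), (49, 79, 112),
   (22, 134, 101), (16, 81, 131), (55, 132, 82), (36, 84, 103), (35, 129, 110)]

def s71 : List (ℕ × ℕ) :=
  [(28, 53), (6, 47), (6, 48), (12, 52), (12, 5), (5, 6), (15, 11), (4, 78), (32, 20), (19, 57),
   (19, 57), (0, 3), (7, 51), (7, 51), (0, 4), (23, 1), (0, 52), (28, 6), (30, 1), (7, 52),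
   (7, 5), (26, 73), (4, 71), (21, 42), (26, 72), (4, 70), (21, 41), (14, 81), (17, 76),
   (12, 18), (14, 80), (17, 77), (12, 17), (24, 78), (20, 2), (17, 20), (24, 79), (31, 50),
   (17, 19), (34, 67), (18, 40), (8, 74), (34, 66), (18, 39), (8, 75), (30, 83), (7, 29),
   (22, 45), (30, 82), (7, 30), (22, 46), (2, 80), (23, 10), (5, 77), (2, 81), (23, 9), (5, 76),
   (7, 79), (14, 50), (18, 12), (7, 78), (3, 2), (18, 11), (3, 65), (3, 65), (0, 21), (3, 64),
   (3, 64), (0, 22), (26, 34), (3, 86), (12, 43), (26, 33), (3, 87), (12, 44), (21, 61),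
   (26, 36), (5, 92), (21, 60), (26, 35), (5, 93), (7, 63), (30, 58), (16, 85), (7, 62),
   (30, 59), (16, 84), (28, 15), (23, 83), (15, 45), (28, 16), (23, 82), (15, 46), (12, 91),
   (32, 54), (5, 69), (12, 90), (32, 55), (5, 68), (12, 87), (21, 44), (9, 24), (12, 86),
   (21, 43), (9, 23), (14, 93), (9, 26), (30, 60), (14, 92), (9, 25), (30, 61), (0, 38), (1, 88),
   (1, 89), (0, 37), (1, 89), (1, 88), (25, 75), (16, 66), (17, 14), (25, 74), (16, 67),
   (17, 13), (14, 8), (18, 70), (5, 72), (14, 7), (18, 71), (5, 73), (26, 86), (14, 34),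
   (23, 23), (26, 87), (14, 33), (23, 24), (13, 15), (8, 83), (20, 29), (13, 16), (8, 82),
   (20, 30), (0, 48), (29, 0), (22, 53), (0, 47), (29, 0), (22, 53), (19, 56), (19, 56), (0, 49),
   (28, 79), (21, 19), (4, 12), (28, 4), (28, 4), (0, 51), (0, 5), (23, 1), (28, 6), (7, 0),
   (13, 47), (13, 48), (8, 69), (3, 31), (15, 91), (8, 68), (3, 32), (15, 90), (16, 49), (0, 56),
   (16, 49), (16, 3), (0, 57), (16, 3), (21, 85), (5, 27), (12, 63), (21, 84), (5, 28), (12, 62),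
   (14, 26), (19, 93), (5, 35), (14, 25), (19, 92), (5, 36), (28, 28), (23, 59), (9, 84),
   (28, 27), (23, 58), (9, 85), (32, 22), (0, 64), (32, 22), (32, 21), (0, 65), (32, 21),
   (1, 14), (19, 39), (9, 75), (1, 13), (19, 40), (9, 74), (27, 55), (7, 90), (30, 32), (27, 54),
   (7, 91), (30, 31), (22, 72), (31, 8), (17, 41), (22, 73), (31, 7), (17, 42), (9, 8), (13, 70),
   (30, 41), (9, 7), (13, 71), (30, 42), (10, 40), (27, 13), (26, 67), (10, 39), (27, 14),
   (26, 66), (30, 18), (18, 9), (32, 81), (30, 17), (18, 10), (32, 80), (11, 11), (31, 2),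
   (28, 20), (11, 12), (7, 50), (28, 19), (21, 10), (3, 77), (33, 17), (21, 9), (3, 76),
   (33, 18), (12, 30), (5, 16), (27, 46), (12, 29), (5, 15), (27, 45), (14, 59), (26, 62),
   (19, 28), (14, 58), (26, 63), (19, 27), (23, 34), (9, 43), (32, 23), (23, 33), (9, 44),
   (32, 24), (0, 89), (34, 37), (34, 38), (0, 88), (34, 38), (34, 37), (23, 32), (20, 55),
   (28, 68), (23, 31), (20, 54), (28, 69), (21, 36), (16, 61), (30, 25), (21, 35), (16, 60),
   (30, 26)]

theorem ex71 : ExistsRDS 3 4 (2 * 71) :=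
  gen 71 2 35 a71 b71 s71 (by norm_num) (by norm_num) (by decide +kernel) (by decide +kernel)
    (by decide +kernel) (by decide +kernel) (by decide +kernel)

def a83 : List Tr :=
  [(1, 82, 83), (3, 87, 90), (80, 104, 101), (12, 159, 162), (10, 145, 155), (73, 148, 137),
   (71, 112, 94), (49, 91, 92), (34, 158, 157), (98, 116, 118), (151, 133, 131), (64, 95, 108),
   (19, 154, 141), (4, 134, 164), (79, 115, 85), (74, 77, 126), (9, 6, 123), (75, 78, 88),
   (8, 5, 161), (48, 97, 117), (35, 152, 132), (23, 62, 139), (60, 21, 110), (25, 38, 70),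
   (58, 45, 13), (24, 31, 138), (59, 52, 111), (11, 114, 121), (72, 135, 128), (51, 142, 156),
   (32, 107, 93), (16, 17, 84), (67, 66, 165), (39, 61, 144), (44, 22, 105), (106, 130, 153),
   (143, 119, 96), (7, 43, 50), (76, 40, 33), (27, 30, 102), (56, 53, 147), (65, 81, 109),
   (18, 2, 140), (54, 68, 69), (29, 15, 14), (37, 57, 63), (46, 26, 20), (28, 47, 149),
   (55, 36, 100), (41, 103, 120), (42, 146, 129), (86, 89, 124), (163, 160, 125),
   (113, 127, 150), (136, 122, 99)]

def b83 : List Tr :=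
  [(83, 84, 165), (1, 133, 137), (82, 132, 136), (79, 112, 116), (67, 113, 117), (4, 138, 142),
   (16, 96, 155), (42, 153, 111), (41, 94, 107), (69, 121, 146), (14, 128, 103), (110, 114, 161),
   (139, 135, 88), (51, 89, 147), (32, 160, 102), (27, 141, 164), (56, 108, 85), (30, 134, 145),
   (53, 115, 104), (64, 90, 158), (19, 159, 91), (28, 92, 120), (55, 157, 129), (9, 100, 125),
   (74, 149, 124), (48, 151, 156), (35, 98, 93), (75, 106, 148), (8, 143, 101), (29, 126, 162),
   (54, 123, 87), (81, 150, 152), (2, 99, 97), (21, 31, 130), (62, 52, 119), (3, 58, 118),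
   (80, 25, 131), (26, 47, 73), (57, 36, 10), (12, 38, 109), (71, 45, 140), (23, 77, 144),
   (60, 6, 105), (44, 49, 154), (39, 34, 95), (20, 33, 70), (63, 50, 13), (61, 66, 78),
   (22, 17, 5), (11, 18, 76), (72, 65, 7), (37, 68, 122), (46, 15, 127), (40, 59, 163),
   (43, 24, 86)]

def s83 : List (ℕ × ℕ) :=
  [(23, 34), (23, 33), (0, 55), (34, 58), (34, 58), (0, 1), (38, 86), (38, 86), (0, 2), (34, 59),
   (1, 57), (1, 56), (31, 77), (31, 77), (0, 4), (18, 82), (19, 64), (35, 30), (26, 11),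
   (40, 85), (23, 74), (9, 28), (33, 14), (4, 49), (9, 27), (33, 13), (4, 50), (3, 39), (12, 22),
   (40, 97), (3, 40), (12, 21), (40, 96), (15, 6), (38, 74), (14, 85), (8, 61), (38, 75),
   (14, 84), (12, 50), (8, 8), (17, 27), (12, 49), (8, 7), (17, 28), (20, 98), (13, 89), (7, 54),
   (20, 99), (13, 88), (7, 53), (2, 47), (29, 109), (25, 52), (2, 48), (29, 108), (25, 51),
   (0, 20), (3, 72), (3, 73), (0, 19), (3, 73), (3, 72), (32, 40), (28, 96), (29, 10), (32, 39),
   (28, 97), (29, 9), (0, 24), (2, 103), (2, 102), (0, 23), (2, 102), (2, 103), (4, 94),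
   (13, 32), (19, 36), (4, 95), (13, 31), (19, 35), (32, 8), (36, 50), (24, 13), (32, 7),
   (36, 49), (24, 14), (25, 65), (40, 63), (24, 83), (25, 64), (6, 5), (24, 82), (28, 26),
   (32, 95), (6, 35), (28, 25), (32, 94), (6, 36), (0, 34), (18, 0), (18, 55), (0, 33), (18, 0),
   (18, 55), (35, 31), (26, 95), (22, 26), (35, 32), (26, 94), (22, 25), (17, 101), (17, 100),
   (0, 38), (17, 100), (17, 101), (0, 37), (9, 22), (37, 97), (38, 9), (9, 21), (37, 96),
   (38, 10), (5, 91), (18, 107), (37, 66), (5, 90), (18, 106), (37, 67), (0, 44), (2, 45),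
   (2, 46), (0, 43), (2, 46), (2, 45), (0, 46), (39, 43), (39, 44), (0, 45), (39, 44), (39, 43),
   (27, 109), (39, 17), (23, 52), (27, 108), (39, 18), (23, 51), (29, 14), (5, 28), (37, 7),
   (29, 13), (5, 27), (37, 8), (16, 18), (4, 108), (18, 48), (16, 17), (4, 109), (18, 47),
   (34, 16), (13, 99), (6, 88), (34, 15), (13, 98), (6, 89), (0, 0), (23, 33), (23, 34), (0, 57),
   (33, 59), (40, 3), (0, 56), (33, 59), (40, 3), (7, 1), (0, 58), (7, 1), (7, 3), (8, 57),
   (8, 56), (4, 87), (4, 87), (0, 60), (33, 12), (30, 75), (6, 84), (38, 76), (0, 62), (38, 76),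
   (25, 83), (1, 29), (26, 65), (16, 30), (22, 5), (40, 82), (16, 29), (15, 63), (40, 83),
   (22, 107), (4, 41), (9, 91), (22, 106), (4, 42), (9, 90), (17, 71), (9, 78), (35, 81),
   (17, 70), (9, 79), (35, 80), (24, 69), (33, 79), (18, 80), (24, 68), (33, 78), (18, 81),
   (0, 73), (38, 20), (38, 19), (0, 72), (38, 19), (38, 20), (17, 85), (18, 6), (3, 11),
   (17, 84), (11, 61), (3, 12), (3, 62), (3, 62), (0, 76), (10, 4), (10, 4), (0, 77), (26, 81),
   (8, 71), (32, 68), (26, 80), (8, 70), (32, 69), (15, 79), (23, 70), (6, 69), (15, 78),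
   (23, 71), (6, 68), (23, 5), (1, 64), (17, 30), (16, 63), (1, 65), (17, 29), (24, 75),
   (27, 12), (35, 61), (24, 74), (27, 11), (1, 6), (3, 2), (0, 86), (3, 2), (37, 60), (0, 87),
   (37, 60), (28, 16), (7, 99), (35, 53), (28, 15), (7, 98), (35, 54), (36, 42), (13, 106),
   (32, 67), (36, 41), (13, 107), (32, 66), (19, 104), (19, 105), (0, 93), (19, 105), (19, 104),
   (0, 92), (37, 25), (9, 32), (15, 36), (37, 26), (9, 31), (15, 35), (4, 40), (13, 21), (1, 10),
   (4, 39), (13, 22), (1, 9), (34, 89), (21, 15), (28, 54), (34, 88), (21, 16), (28, 53),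
   (0, 101), (24, 38), (24, 37), (0, 100), (24, 37), (24, 38), (0, 103), (39, 23), (39, 24),
   (0, 102), (39, 24), (39, 23), (0, 105), (22, 92), (22, 93), (0, 104), (22, 93), (22, 92),
   (28, 90), (23, 42), (19, 67), (28, 91), (23, 41), (19, 66), (12, 18), (14, 48), (37, 51),
   (12, 17), (14, 47), (37, 52)]

theorem ex83 : ExistsRDS 3 4 (2 * 83) :=
  gen 83 3 41 a83 b83 s83 (by norm_num) (by norm_num) (by decide +kernel) (by decide +kernel)
    (by decide +kernel) (by decide +kernel) (by decide +kernel)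

end RDSQSAux

/-- There exists an RDSQS(2v) for v ∈ {23, 29, 41, 47, 53, 59, 71, 83}. -/
theorem stmt_17 (v : ℕ)
    (hv : v ∈ ({23, 29, 41, 47, 53, 59, 71, 83} : Finset ℕ)) :
    ExistsRDSQS (2 * v) := by
  simp only [Finset.mem_insert, Finset.mem_singleton] at hv
  unfold ExistsRDSQS
  rcases hv with rfl | rfl | rfl | rfl | rfl | rfl | rfl | rfl
  · exact RDSQSAux.ex23
  · exact RDSQSAux.ex29
  · exact RDSQSAux.ex41
  · exact RDSQSAux.ex47
  · exact RDSQSAux.ex53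
  · exact RDSQSAux.ex59
  · exact RDSQSAux.ex71
  · exact RDSQSAux.ex83
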